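/- Let I be an integer with I ≥ 5, let K = (I² − 3I)/2, and let R = (I² − 3I)/2 + 1. Then, for F = ℝ and for F = ℂ, the SFS-CPD of an I×I×K SFS-tensor of SFS-rank R is generically unique. -/

import Mathlib

/-!
Put `R = (I - 1) * (I - 2) / 2`, so that `K = R - 1`. Outside a null set the entries of `A` are
algebraically independent over `ℚ`, and so are those of `C` (`ae_algebraicIndependent`). Over a
field `F` of characteristic zero this implies that every assignment of values to the entries of `A`
is attained by a derivation of `F` over `ℚ` (`HasFreeDerivations`). Genericity of `A` and `C` is
used only in this form, by differentiating algebraic relations, and the same argument covers `ℝ`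
and `ℂ`.

The key lemma is `HasFreeDerivations.card_support_le_two`: if `∑ r, M r • a_r a_rᵀ` is a combination
of two squares `b₀ b₀ᵀ`, `b₁ b₁ᵀ`, then at most two of the `M r` are nonzero. For a support of size at
most `I` this is a comparison of ranks. Otherwise fix `r₀` in the support. The symmetric matrices
`X` with `X b₀ = X b₁ = 0` form a space of dimension at least `(I - 1) * (I - 2) / 2 = R`, so some
nonzero one of them satisfies the `R - 1` equations `a_rᵀ X a_r = 0` for `r ≠ r₀`; the relation then
gives the equation for `r₀` as well. Differentiating the relation in the direction of a single
entry of `A` and pairing with `X` yields `X a_r = 0` for all `r` in the support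
(`HasFreeDerivations.derive_pairing`), and since there are at least `I` such `r`, `X = 0`.

Let `n` be a kernel vector of `C`; all its entries are nonzero, and the vectors `Cᵀ y` satisfy
`n ⬝ Cᵀ y = 0`, so a nonzero `Cᵀ y` has at least two nonzero entries. Given another decomposition
`(b, d)` with at most `R` terms, the vectors `(d_s ⬝ y)_s` contain a hyperplane `μ⊥`, and the key
lemma forces all `μ s` to be nonzero. For `s ≠ t`, choosing `y` so that `(d_u ⬝ y)_u` is supported on
`{s, t}` gives a vector `Cᵀ y` supported on exactly two indices `p, q`, with `b_s` in the span of
`a_p, a_q`. If `b_s` were not parallel to a column of `A`, different choices of `t` would give the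
same pair `p, q`, hence proportional vectors `Cᵀ y`, hence proportional `y`, which is absurd. So
every `b_s` is parallel to some column of `A` (`exists_parallel`), and the linear independence of the
matrices `a_r a_rᵀ` matches the terms bijectively (`exists_bijective`).
-/

open MeasureTheory

noncomputable section

/-- The SFS-tensor `[A,A,C]_R` with entries `t_{ijk} = Σ_r A i r * A j r * C k r`. -/
def sfsSum {F : Type*} [CommRing F] {I K R : ℕ}
    (A : Fin I → Fin R → F) (C : Fin K → Fin R → F) :
    Fin I → Fin I → Fin K → F :=
  fun i j k => ∑ r : Fin R, A i r * A j r * C k r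

/-- `T` is the sum of the `R` SFS rank-1 terms `a_r ∘ a_r ∘ c_r` with all vectors nonzero. -/
def IsSfsPD {F : Type*} [CommRing F] {I K : ℕ} (T : Fin I → Fin I → Fin K → F) (R : ℕ)
    (a : Fin R → Fin I → F) (c : Fin R → Fin K → F) : Prop :=
  (∀ r, a r ≠ 0) ∧ (∀ r, c r ≠ 0) ∧
    ∀ i j k, T i j k = ∑ r : Fin R, a r i * a r j * c r k

/-- The SFS-rank of an SFS-tensor: the minimal number of SFS rank-1 terms. -/
def sfsRank {F : Type*} [CommRing F] {I K : ℕ} (T : Fin I → Fin I → Fin K → F) : ℕ :=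
  sInf {R | ∃ a c, IsSfsPD T R a c}

/-- The SFS-CPD of `T` is unique: any two decompositions of `T` into `sfsRank T`
SFS rank-1 terms coincide up to permutation of the SFS rank-1 terms. -/
def SfsCPDUnique {F : Type*} [CommRing F] {I K : ℕ} (T : Fin I → Fin I → Fin K → F) : Prop :=
  ∀ (a a' : Fin (sfsRank T) → Fin I → F) (c c' : Fin (sfsRank T) → Fin K → F),
    IsSfsPD T (sfsRank T) a c → IsSfsPD T (sfsRank T) a' c' →
    ∃ σ : Equiv.Perm (Fin (sfsRank T)),
      ∀ r i j k, a r i * a r j * c r k = a' (σ r) i * a' (σ r) j * c' (σ r) k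

/-- The SFS-CPD of an `I×I×K` SFS-tensor of SFS-rank `R` is generically unique over `F`:
the set of pairs `(A,C)` for which the SFS-CPD of `[A,A,C]_R` is not unique has
Lebesgue measure zero. -/
def SFSGenericallyUnique (F : Type*) [CommRing F] [MeasureSpace F] (I K R : ℕ) : Prop :=
  volume {p : (Fin I → Fin R → F) × (Fin K → Fin R → F) |
    ¬ SfsCPDUnique (sfsSum p.1 p.2)} = 0

/-! ### Derivations with prescribed values -/

open scoped IntermediateField.algebraAdjoinAdjoin in
/-- If `w` is a transcendence basis, `F` is formally étale over the polynomial ring in the `w i`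
(a localization followed by a separable algebraic extension), so derivations of the polynomial ring
with values in `F` extend to `F`. -/
theorem exists_derivation_of_isTranscendenceBasis {F ι : Type} [Field F] [CharZero F] {w : ι → F}
    (hw : IsTranscendenceBasis ℚ w) (f : ι → F) :
    ∃ D : Derivation ℚ F F, ∀ i, D (w i) = f i := by
  let _ : Algebra (MvPolynomial ι ℚ) F := (MvPolynomial.aeval (R := ℚ) w).toAlgebra
  have hX : ∀ i, algebraMap (MvPolynomial ι ℚ) F (MvPolynomial.X i) = w i :=
    fun i => MvPolynomial.aeval_X w i
  have : IsScalarTower ℚ (MvPolynomial ι ℚ) F := IsScalarTower.of_algHom _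
  have : Algebra.FormallyEtale (MvPolynomial ι ℚ) F := by
    let _ : Algebra (MvPolynomial ι ℚ) (Algebra.adjoin ℚ (Set.range w)) :=
      (hw.1.aevalEquiv : MvPolynomial ι ℚ →+* _).toAlgebra
    have : IsScalarTower (MvPolynomial ι ℚ) (Algebra.adjoin ℚ (Set.range w)) F := by
      refine IsScalarTower.of_algebraMap_eq fun p => ?_
      exact (hw.1.algebraMap_aevalEquiv p).symm
    have : Algebra.FormallyEtale (MvPolynomial ι ℚ) (Algebra.adjoin ℚ (Set.range w)) :=
      .of_equiv (AlgEquiv.ofBijective (Algebra.ofId _ _) hw.1.aevalEquiv.bijective)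
    have : Algebra.FormallyEtale (Algebra.adjoin ℚ (Set.range w))
      (IntermediateField.adjoin ℚ (Set.range w)) := .of_isLocalization (nonZeroDivisors _)
    have : Algebra.IsAlgebraic (IntermediateField.adjoin ℚ (Set.range w)) F := hw.isAlgebraic_field
    have : Algebra.FormallyEtale (IntermediateField.adjoin ℚ (Set.range w)) F :=
      Algebra.FormallyEtale.of_isSeparable _ F
    have : Algebra.FormallyEtale (Algebra.adjoin ℚ (Set.range w)) F :=
      .comp _ (IntermediateField.adjoin ℚ (Set.range w)) _
    exact .comp _ (Algebra.adjoin ℚ (Set.range w)) _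
  have hb := KaehlerDifferential.isBaseChange_of_formallyEtale ℚ (MvPolynomial ι ℚ) F
  let g := (MvPolynomial.mkDerivation (R := ℚ) (A := F) f).liftKaehlerDifferential
  refine ⟨(hb.lift g).compDer (KaehlerDifferential.D ℚ F), fun i => ?_⟩
  have := hb.lift_eq g (KaehlerDifferential.D ℚ _ (MvPolynomial.X i))
  rw [KaehlerDifferential.map_D, hX, Derivation.liftKaehlerDifferential_comp_D,
    MvPolynomial.mkDerivation_X] at this
  exact this

theorem exists_derivation {F ι : Type} [Field F] [CharZero F] {v : ι → F}
    (hv : AlgebraicIndependent ℚ v) (f : ι → F) :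
    ∃ D : Derivation ℚ F F, ∀ i, D (v i) = f i := by
  obtain ⟨t, ht, htb⟩ := exists_isTranscendenceBasis_superset hv.coe_range
  obtain ⟨D, hD⟩ := exists_derivation_of_isTranscendenceBasis htb
    (fun x => Function.extend v f 0 x)
  refine ⟨D, fun i => ?_⟩
  have := hD ⟨v i, ht (Set.mem_range_self i)⟩
  rw [hv.injective.extend_apply] at this
  exact this

/-! ### Algebraic independence almost everywhere -/

/-- The zero set of a nonzero polynomial is null: by Fubini, since after fixing all variables but
the first outside the zero set of the leading coefficient only finitely many roots remain. -/
theorem volume_mvPolynomial_zeros {F : Type} [Field F] [TopologicalSpace F]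
    [IsTopologicalRing F] [T1Space F] [SecondCountableTopology F] [MeasureSpace F] [BorelSpace F]
    [SigmaFinite (volume : Measure F)] [NullSingletonClass (volume : Measure F)] :
    ∀ {n : ℕ} (p : MvPolynomial (Fin n) F), p ≠ 0 →
      volume {x : Fin n → F | MvPolynomial.eval x p = 0} = 0 := by
  intro n
  induction n with
  | zero =>
    intro p hp
    have : {x : Fin 0 → F | MvPolynomial.eval x p = 0} = ∅ := by
      ext x
      simp only [Set.mem_ofPred_eq, Set.mem_empty_iff_false, iff_false]
      intro h
      apply hp
      rw [MvPolynomial.eq_C_of_isEmpty p] at h ⊢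
      simpa using h
    rw [this, measure_empty]
  | succ n ih =>
    intro p hp
    set q := MvPolynomial.finSuccEquiv F n p with hq
    have hq0 : q ≠ 0 := by simpa [hq] using hp
    have hlc : q.leadingCoeff ≠ 0 := by simpa using hq0
    have hmp := (volume_preserving_piFinSuccAbove (fun _ : Fin (n + 1) => F) 0).symm
    have hm : MeasurableSet {x : Fin (n + 1) → F | MvPolynomial.eval x p = 0} :=
      (isClosed_singleton.preimage (MvPolynomial.continuous_eval p)).measurableSet
    rw [← hmp.measure_preimage hm.nullMeasurableSet]
    rw [Measure.volume_eq_prod, Measure.prod_apply_symm (hmp.measurable hm),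
      lintegral_eq_zero_iff (measurable_measure_prodMk_right (hmp.measurable hm))]
    have hae : ∀ᵐ x : Fin n → F, MvPolynomial.eval x q.leadingCoeff ≠ 0 := by
      rw [ae_iff]
      simpa using ih _ hlc
    filter_upwards [hae] with x hx
    have hmap : q.map (MvPolynomial.eval x) ≠ 0 := by
      intro h
      apply hx
      have := congrArg (fun r => Polynomial.coeff r q.natDegree) h
      simpa using this
    have hfin : Set.Finite {y : F | (q.map (MvPolynomial.eval x)).IsRoot y} :=
      Polynomial.finite_setOfPred_isRoot hmap
    refine (hfin.subset ?_).measure_zero _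
    intro y hy
    have hy' : MvPolynomial.eval (Fin.cons y x : Fin (n + 1) → F) p = 0 := by
      simpa [MeasurableEquiv.piFinSuccAbove, Fin.insertNthEquiv] using hy
    rw [MvPolynomial.eval_eq_eval_mv_eval'] at hy'
    exact hy'

theorem measurePreserving_flatten {F : Type} [MeasureSpace F] [SigmaFinite (volume : Measure F)]
    (m R : ℕ) :
    MeasurePreserving (fun (x : Fin m → Fin R → F) (l : Fin (m * R)) =>
      x (finProdFinEquiv.symm l).1 (finProdFinEquiv.symm l).2) volume volume := by
  have hmeas : Measurable (fun (x : Fin m → Fin R → F) (l : Fin (m * R)) =>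
      x (finProdFinEquiv.symm l).1 (finProdFinEquiv.symm l).2) := by
    fun_prop
  refine ⟨hmeas, ?_⟩
  symm
  refine Measure.pi_eq fun s hs => ?_
  rw [Measure.map_apply hmeas (MeasurableSet.univ_pi hs)]
  have hset : (fun (x : Fin m → Fin R → F) (l : Fin (m * R)) =>
      x (finProdFinEquiv.symm l).1 (finProdFinEquiv.symm l).2) ⁻¹' Set.univ.pi s
      = Set.univ.pi fun i => Set.univ.pi fun r => s (finProdFinEquiv (i, r)) := by
    ext x
    simp only [Set.mem_preimage, Set.mem_pi, Set.mem_univ, true_implies]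
    constructor
    · intro h i r
      simpa using h (finProdFinEquiv (i, r))
    · intro h l
      have := h (finProdFinEquiv.symm l).1 (finProdFinEquiv.symm l).2
      rwa [Prod.mk.eta, Equiv.apply_symm_apply] at this
  rw [hset, volume_pi_pi]
  simp_rw [volume_pi_pi]
  rw [← Fintype.prod_prod_type']
  exact Fintype.prod_equiv finProdFinEquiv _ _ fun _ => rfl

/-- Almost every matrix has algebraically independent entries, since there are only countably many
polynomials over `ℚ`. -/
theorem ae_algebraicIndependent {F : Type} [Field F] [CharZero F] [TopologicalSpace F]
    [IsTopologicalRing F] [T1Space F] [SecondCountableTopology F] [MeasureSpace F] [BorelSpace F]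
    [SigmaFinite (volume : Measure F)] [NullSingletonClass (volume : Measure F)] (m R : ℕ) :
    ∀ᵐ x : Fin m → Fin R → F, AlgebraicIndependent ℚ fun l : Fin (m * R) =>
      x (finProdFinEquiv.symm l).1 (finProdFinEquiv.symm l).2 := by
  refine (measurePreserving_flatten (F := F) m R).quasiMeasurePreserving.ae
    (p := fun x => AlgebraicIndependent ℚ x) ?_
  have hall : ∀ p : MvPolynomial (Fin (m * R)) ℚ, ∀ᵐ x : Fin (m * R) → F,
      MvPolynomial.aeval x p = 0 → p = 0 := by
    intro p
    by_cases hp : p = 0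
    · simp [hp]
    · have h0 : MvPolynomial.map (algebraMap ℚ F) p ≠ 0 := by
        intro h
        exact hp (MvPolynomial.map_injective _ (algebraMap ℚ F).injective (by simpa using h))
      rw [ae_iff]
      simpa [hp, MvPolynomial.aeval_def, MvPolynomial.eval_map] using volume_mvPolynomial_zeros _ h0
  have : Countable (MvPolynomial (Fin (m * R)) ℚ) := by
    rw [← Cardinal.mk_le_aleph0_iff]
    exact MvPolynomial.cardinalMk_le_max.trans
      (max_le (max_le Cardinal.mk_le_aleph0 Cardinal.mk_le_aleph0) le_rfl)
  filter_upwards [ae_all_iff.2 hall] with x hx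
  exact algebraicIndependent_iff.2 hx

/-! ### Relations among the squares of the columns -/

section
open Finset

/-- The form in which genericity of a matrix is used: the values of a derivation of `F` over `ℚ` on
the entries of `A` can be prescribed arbitrarily. -/
def HasFreeDerivations {F : Type} [Field F] [CharZero F] {m R : ℕ} (A : Fin m → Fin R → F) :
    Prop :=
  ∀ V : Fin m → Fin R → F, ∃ D : Derivation ℚ F F, ∀ i r, D (A i r) = V i r

theorem exists_ne_zero_sum_eq_zero {F α β : Type} [Field F] [Fintype α] [Fintype β]
    (h : Fintype.card β < Fintype.card α) (f : β → α → F) :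
    ∃ z : α → F, z ≠ 0 ∧ ∀ b, ∑ a, f b a * z a = 0 := by
  have hk : LinearMap.ker (Matrix.mulVecLin (Matrix.of f)) ≠ ⊥ := by
    apply LinearMap.ker_ne_bot_of_finrank_lt
    simpa using h
  obtain ⟨z, hz, hz0⟩ := Submodule.exists_mem_ne_zero_of_ne_bot hk
  refine ⟨z, hz0, fun b => ?_⟩
  exact congrFun (LinearMap.mem_ker.1 hz) b

section
variable {F : Type} [Field F] [CharZero F] [DecidableEq F] {m R : ℕ} {A : Fin m → Fin R → F}

/-- Any `m` columns of `A` are linearly independent. A vector `z` orthogonal to all but one of the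
columns in a relation is orthogonal to the remaining one too; pairing `z` with the derivative of the
relation in the direction of one entry of that column gives a contradiction. -/
theorem HasFreeDerivations.eq_zero_of_sum_eq_zero (hA : HasFreeDerivations A) (x : Fin R → F)
    (hx : ∀ i, ∑ r, A i r * x r = 0) (hc : #{r | x r ≠ 0} ≤ m) : x = 0 := by
  by_contra hne
  obtain ⟨r₀, hr₀⟩ := Function.ne_iff.1 hne
  simp only [Pi.zero_apply] at hr₀
  set S : Finset (Fin R) := {r | x r ≠ 0} with hS
  have hr₀S : r₀ ∈ S := by simp [hS, hr₀]
  obtain ⟨z, hz0, hz⟩ := exists_ne_zero_sum_eq_zero (β := S.erase r₀) (α := Fin m)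
    (by
      rw [Fintype.card_coe, card_erase_of_mem hr₀S, Fintype.card_fin]
      have := card_pos.2 ⟨_, hr₀S⟩
      omega) (fun r i => A i r)
  have hz' : ∀ r, r ≠ r₀ → x r ≠ 0 → ∑ i, A i r * z i = 0 := fun r h1 h2 =>
    hz ⟨r, by simp [hS, h1, h2]⟩
  have hz₀ : ∑ i, A i r₀ * z i = 0 := by
    have h1 : ∑ r, x r * ∑ i, A i r * z i = 0 := by
      have : ∑ i, z i * ∑ r, A i r * x r = 0 := by simp [hx]
      rw [← this]
      simp_rw [mul_sum]
      rw [sum_comm]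
      exact sum_congr rfl fun _ _ => sum_congr rfl fun _ _ => by ring
    rw [sum_eq_single r₀] at h1
    · exact (mul_eq_zero.1 h1).resolve_left hr₀
    · intro r _ hr
      by_cases hxr : x r = 0
      · simp [hxr]
      · simp [hz' r hr hxr]
    · simp
  obtain ⟨i₀, hi₀⟩ := Function.ne_iff.1 hz0
  obtain ⟨D, hD⟩ := hA (fun i r => if i = i₀ ∧ r = r₀ then 1 else 0)
  have h2 : ∑ i, z i * D (∑ r, A i r * x r) = 0 := by simp [hx]
  have h3 : ∑ i, z i * D (∑ r, A i r * x r)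
      = ∑ r, D (x r) * ∑ i, A i r * z i + ∑ i, ∑ r, z i * x r * D (A i r) := by
    simp_rw [mul_sum]
    rw [sum_comm (s := (univ : Finset (Fin R))), ← sum_add_distrib]
    refine sum_congr rfl fun i _ => ?_
    rw [map_sum, mul_sum, ← sum_add_distrib]
    refine sum_congr rfl fun r _ => ?_
    rw [Derivation.leibniz]
    simp only [smul_eq_mul]
    ring
  have h4 : ∑ r, D (x r) * ∑ i, A i r * z i = 0 := by
    refine sum_eq_zero fun r _ => ?_
    by_cases hr : r = r₀
    · rw [hr, hz₀, mul_zero]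
    · by_cases hxr : x r = 0
      · simp [hxr]
      · simp [hz' r hr hxr]
  rw [h3, h4, zero_add] at h2
  simp [hD, ite_and] at h2
  exact h2.elim hi₀ hr₀

/-- Any `m` columns of `A` span, being independent. -/
theorem HasFreeDerivations.eq_zero_of_orthogonal (hA : HasFreeDerivations A) (y : Fin m → F)
    (S : Finset (Fin R)) (hS : m ≤ #S) (hy : ∀ r ∈ S, ∑ i, y i * A i r = 0) : y = 0 := by
  by_contra hne
  obtain ⟨S', hS'S, hS'⟩ := exists_subset_card_eq hS
  let e : Fin m ≃ S' := (Fintype.equivFinOfCardEq (by simpa using hS')).symm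
  let B : Matrix (Fin m) (Fin m) F := Matrix.of fun i l => A i (e l)
  have hdet : B.det = 0 := Matrix.exists_vecMul_eq_zero_iff.1
    ⟨y, hne, funext fun l => hy _ (hS'S (e l).2)⟩
  obtain ⟨u, hu0, hu⟩ := Matrix.exists_mulVec_eq_zero_iff.2 hdet
  let x : Fin R → F := fun r => if h : r ∈ S' then u (e.symm ⟨r, h⟩) else 0
  have hx : x = 0 := by
    apply hA.eq_zero_of_sum_eq_zero
    · intro i
      have h1 : ∑ r ∈ S', A i r * x r = ∑ r, A i r * x r := by
        refine sum_subset (subset_univ _) fun r _ hr => ?_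
        simp [x, hr]
      rw [← h1, ← sum_coe_sort, ← e.sum_comp]
      simpa [x, B, Matrix.mulVec, dotProduct] using congrFun hu i
    · rw [← hS']
      refine card_le_card fun r hr => ?_
      by_contra h
      simp [x, h] at hr
  apply hu0
  ext l
  have := congrFun hx (e l)
  simpa [x] using this

theorem HasFreeDerivations.ne_zero_column (hA : HasFreeDerivations A) (hm : 1 ≤ m) (r : Fin R) :
    ∃ i, A i r ≠ 0 := by
  by_contra! h
  have := hA.eq_zero_of_sum_eq_zero (Pi.single r 1) (fun i => by simp [Pi.single_apply, h])
    ((card_le_one.2 fun a ha b hb => by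
      simp [Pi.single_apply] at ha hb; rw [ha, hb]).trans hm)
  simpa using congrFun this r

/-- The rank argument: as long as the support has size at most `m`, its columns are independent and
`∑ r, M r • a_r a_rᵀ` has rank equal to the size of the support, which is at most the number `q` of
squares on the right. -/
theorem HasFreeDerivations.card_support_le_of_card_le (hA : HasFreeDerivations A) (hmR : m ≤ R)
    {q : ℕ} (M : Fin R → F) (β : Fin q → F) (b : Fin q → Fin m → F)
    (h : ∀ i j, ∑ r, A i r * A j r * M r = ∑ t, β t * b t i * b t j)
    (hc : #{r | M r ≠ 0} ≤ m) : #{r | M r ≠ 0} ≤ q := by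
  by_contra! hlt
  set S : Finset (Fin R) := {r | M r ≠ 0} with hS
  obtain ⟨T, hTS, hT⟩ := exists_subset_card_eq (Nat.succ_le_of_lt hlt)
  obtain ⟨S', hSS', hS'⟩ := exists_superset_card_eq (n := m) hc (by simpa using hmR)
  obtain ⟨z, hz0, hz⟩ := exists_ne_zero_sum_eq_zero (β := Fin q ⊕ ↥(S' \ T)) (α := Fin m)
    (by
      rw [Fintype.card_sum, Fintype.card_coe, card_sdiff_of_subset (hTS.trans hSS'),
        Fintype.card_fin, Fintype.card_fin]
      have := card_le_card (hTS.trans hSS')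
      omega) (Sum.elim b fun r i => A i r)
  have hzb : ∀ t, ∑ i, b t i * z i = 0 := fun t => hz (Sum.inl t)
  have hx : (fun r => M r * ∑ j, A j r * z j) = 0 := by
    apply hA.eq_zero_of_sum_eq_zero
    · intro i
      calc ∑ r, A i r * (M r * ∑ j, A j r * z j)
          = ∑ j, z j * ∑ r, A i r * A j r * M r := by
            simp_rw [mul_sum]
            rw [sum_comm]
            exact sum_congr rfl fun _ _ => sum_congr rfl fun _ _ => by ring
        _ = ∑ t, β t * b t i * ∑ j, b t j * z j := by
            simp_rw [h, mul_sum]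
            rw [sum_comm]
            exact sum_congr rfl fun _ _ => sum_congr rfl fun _ _ => by ring
        _ = 0 := by simp [hzb]
    · refine (card_le_card fun r hr => ?_).trans hc
      simp only [hS, mem_filter, mem_univ, true_and] at hr ⊢
      exact left_ne_zero_of_mul hr
  refine hz0 (hA.eq_zero_of_orthogonal z S' hS'.ge fun r hr => ?_)
  simp_rw [mul_comm (z _)]
  by_cases hrT : r ∈ T
  · have hMr : M r ≠ 0 := by simpa [hS] using hTS hrT
    exact (mul_eq_zero.1 (congrFun hx r)).resolve_left hMr
  · exact hz (Sum.inr ⟨r, by simp [hr, hrT]⟩)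


/-- Differentiate the relation `∑ r, M r • a_r a_rᵀ = ∑ t, β t • b_t b_tᵀ` in the direction of the entry
`A i r` and pair with a symmetric `X` that kills every `b_t` and satisfies `a_rᵀ X a_r = 0` on the
support of `M`. Nothing is known about the derivatives of `M`, `β` and `b`, but they all drop out, and
`2 * M r * (X a_r) i = 0` is left. -/
theorem HasFreeDerivations.derive_pairing (hA : HasFreeDerivations A)
    {q : ℕ} (M : Fin R → F) (β : Fin q → F) (b : Fin q → Fin m → F)
    (h : ∀ i j, ∑ r, A i r * A j r * M r = ∑ t, β t * b t i * b t j)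
    (X : Fin m → Fin m → F) (hX : ∀ i j, X i j = X j i) (hXb : ∀ t i, ∑ j, X i j * b t j = 0)
    (hXA : ∀ r, M r ≠ 0 → ∑ i, ∑ j, X i j * (A i r * A j r) = 0) (r : Fin R) (hr : M r ≠ 0)
    (i : Fin m) : ∑ j, X i j * A j r = 0 := by
  obtain ⟨D, hD⟩ := hA (fun i' r' => if i' = i ∧ r' = r then 1 else 0)
  have hb' : ∀ t j, ∑ i, X i j * b t i = 0 := fun t j => by
    simp_rw [fun i => hX i j]; exact hXb t j
  -- the right-hand side of the derived relation pairs to zero with `X`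
  have hright : ∑ i, ∑ j, X i j * D (∑ t, β t * b t i * b t j) = 0 := by
    have h1 : ∀ i j, X i j * D (∑ t, β t * b t i * b t j)
        = ∑ t, (D (β t) * b t i * (X i j * b t j) + β t * D (b t i) * (X i j * b t j)
          + β t * D (b t j) * (X i j * b t i)) := fun i j => by
      rw [map_sum, mul_sum]
      refine sum_congr rfl fun t _ => ?_
      simp only [Derivation.leibniz, smul_eq_mul]
      ring
    simp_rw [h1, sum_add_distrib]
    have e1 : ∑ i, ∑ j, ∑ t, D (β t) * b t i * (X i j * b t j) = 0 :=
      sum_eq_zero fun i _ => by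
        rw [sum_comm]; exact sum_eq_zero fun t _ => by rw [← mul_sum, hXb, mul_zero]
    have e2 : ∑ i, ∑ j, ∑ t, β t * D (b t i) * (X i j * b t j) = 0 :=
      sum_eq_zero fun i _ => by
        rw [sum_comm]; exact sum_eq_zero fun t _ => by rw [← mul_sum, hXb, mul_zero]
    have e3 : ∑ i, ∑ j, ∑ t, β t * D (b t j) * (X i j * b t i) = 0 := by
      rw [sum_comm]
      exact sum_eq_zero fun j _ => by
        rw [sum_comm]; exact sum_eq_zero fun t _ => by rw [← mul_sum, hb', mul_zero]
    rw [e1, e2, e3, add_zero, add_zero]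
  have hleft : ∑ i, ∑ j, X i j * D (∑ r, A i r * A j r * M r)
      = ∑ r, D (M r) * ∑ i, ∑ j, X i j * (A i r * A j r)
        + 2 * ∑ i, ∑ r, D (A i r) * M r * ∑ j, X i j * A j r := by
    have h1 : ∀ i j, X i j * D (∑ r, A i r * A j r * M r)
        = ∑ r, (D (M r) * (X i j * (A i r * A j r)) + D (A i r) * M r * (X i j * A j r)
          + D (A j r) * M r * (X j i * A i r)) := fun i j => by
      rw [map_sum, mul_sum]
      refine sum_congr rfl fun t _ => ?_
      simp only [Derivation.leibniz, smul_eq_mul]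
      rw [hX j i]
      ring
    simp_rw [h1, sum_add_distrib]
    have e1 : ∑ i, ∑ j, ∑ r, D (M r) * (X i j * (A i r * A j r))
        = ∑ r, D (M r) * ∑ i, ∑ j, X i j * (A i r * A j r) := by
      simp_rw [mul_sum]
      rw [sum_comm (s := (univ : Finset (Fin R)))]
      exact sum_congr rfl fun i _ => sum_comm
    have e2 : ∑ i, ∑ j, ∑ r, D (A i r) * M r * (X i j * A j r)
        = ∑ i, ∑ r, D (A i r) * M r * ∑ j, X i j * A j r := by
      simp_rw [mul_sum]
      exact sum_congr rfl fun i _ => sum_comm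
    have e3 : ∑ i, ∑ j, ∑ r, D (A j r) * M r * (X j i * A i r)
        = ∑ i, ∑ r, D (A i r) * M r * ∑ j, X i j * A j r := by
      rw [sum_comm, e2]
    rw [e1, e2, e3]
    ring
  simp_rw [h] at hleft
  rw [hright] at hleft
  have h0 : ∑ r, D (M r) * ∑ i, ∑ j, X i j * (A i r * A j r) = 0 :=
    sum_eq_zero fun r _ => by
      by_cases hMr : M r = 0
      · simp [hMr]
      · rw [hXA r hMr, mul_zero]
  rw [h0, zero_add] at hleft
  have h5 := (mul_eq_zero.1 hleft.symm).resolve_left two_ne_zero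
  simp only [hD, ite_and, ite_mul, one_mul, zero_mul] at h5
  simp only [sum_ite_eq', mem_univ, if_true, sum_ite_irrel, sum_const_zero] at h5
  exact (mul_eq_zero.1 h5).resolve_left hr

theorem exists_orthogonal_family {F : Type} [Field F] {m : ℕ} (b : Fin 2 → Fin m → F) :
    ∃ Z : Fin (m - 2) → Fin m → F, LinearIndependent F Z ∧ ∀ k t, ∑ i, Z k i * b t i = 0 := by
  let f : (Fin m → F) →ₗ[F] (Fin 2 → F) := Matrix.mulVecLin (Matrix.of b)
  have hdim : m - 2 ≤ Module.finrank F (LinearMap.ker f) := by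
    have h1 := f.finrank_range_add_finrank_ker
    have h2 := (LinearMap.range f).finrank_le
    simp only [Module.finrank_fin_fun] at h1 h2
    omega
  let B := Module.finBasis F (LinearMap.ker f)
  refine ⟨fun k => B (Fin.castLE hdim k), ?_, fun k t => ?_⟩
  · exact ((B.linearIndependent.map' _ (Submodule.ker_subtype _)).comp _
      (Fin.castLE_injective hdim))
  · have := congrFun (LinearMap.mem_ker.1 (B (Fin.castLE hdim k)).2) t
    simp_rw [mul_comm _ (b t _)]
    exact this

/-- The key lemma: a combination of the `a_r a_rᵀ` that is also a combination of two squares involves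
at most two of the `a_r`. -/
theorem HasFreeDerivations.card_support_le_two (hA : HasFreeDerivations A) (hm : 5 ≤ m)
    (hR : 2 * R = (m - 1) * (m - 2)) (M : Fin R → F) (β : Fin 2 → F) (b : Fin 2 → Fin m → F)
    (h : ∀ i j, ∑ r, A i r * A j r * M r = ∑ t, β t * b t i * b t j) :
    #{r | M r ≠ 0} ≤ 2 := by
  have hmR : m ≤ R := by
    obtain ⟨k, rfl⟩ := Nat.exists_eq_add_of_le hm
    have e1 : 5 + k - 1 = k + 4 := by omega
    have e2 : 5 + k - 2 = k + 3 := by omega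
    rw [e1, e2] at hR
    nlinarith
  rcases le_total (#{r | M r ≠ 0}) m with hc | hc
  · exact hA.card_support_le_of_card_le hmR M β b h hc
  exfalso
  obtain ⟨r₀, hr₀⟩ : ∃ r, M r ≠ 0 := by
    obtain ⟨r, hr⟩ := card_pos.1 (show 0 < #{r | M r ≠ 0} by omega)
    exact ⟨r, by simpa using hr⟩
  obtain ⟨Z, hZ, hZb⟩ := exists_orthogonal_family b
  rw [Fintype.linearIndependent_iff] at hZ
  -- `t` holds the coordinates of a symmetric matrix `X` in the products of the `Z k`: there are
  -- `R` of them, subject to the `R - 1` equations `a_rᵀ X a_r = 0` for `r ≠ r₀`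
  obtain ⟨t, ht0, ht⟩ := exists_ne_zero_sum_eq_zero (F := F) (β := {r : Fin R // r ≠ r₀})
    (α := Sym2 (Fin (m - 2)))
    (by
      have h1 : Fintype.card {r : Fin R // r ≠ r₀} = R - 1 := by simp
      have h2 : (m - 2 + 1).choose 2 = R := by
        rw [Nat.choose_two_right]
        have e : m - 2 + 1 = m - 1 := by omega
        have e' : m - 1 - 1 = m - 2 := by omega
        rw [e, e', ← hR]
        omega
      rw [h1, Sym2.card, Fintype.card_fin, h2]
      omega)
    (fun r s => ∑ k, ∑ l, if s(k, l) = s then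
      (∑ i, Z k i * A i r) * (∑ i, Z l i * A i r) else 0)
  let X : Fin m → Fin m → F := fun i j => ∑ k, ∑ l, t s(k, l) * (Z k i * Z l j)
  have hXsymm : ∀ i j, X i j = X j i := fun i j => by
    simp only [X]
    rw [sum_comm]
    refine sum_congr rfl fun k _ => sum_congr rfl fun l _ => ?_
    rw [Sym2.eq_swap]
    ring
  have hXb : ∀ u i, ∑ j, X i j * b u j = 0 := fun u i => by
    have : ∑ j, X i j * b u j = ∑ k, ∑ l, t s(k, l) * Z k i * ∑ j, Z l j * b u j := by
      simp only [X, sum_mul, mul_sum]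
      rw [sum_comm]
      refine sum_congr rfl fun k _ => ?_
      rw [sum_comm]
      exact sum_congr rfl fun l _ => sum_congr rfl fun j _ => by ring
    rw [this]
    simp [hZb]
  have hXAt : ∀ r, ∑ i, ∑ j, X i j * (A i r * A j r)
      = ∑ s, (∑ k, ∑ l, if s(k, l) = s then
          (∑ i, Z k i * A i r) * (∑ i, Z l i * A i r) else 0) * t s := fun r => by
    have e1 : ∑ s, (∑ k, ∑ l, if s(k, l) = s then
          (∑ i, Z k i * A i r) * (∑ i, Z l i * A i r) else 0) * t s
        = ∑ k, ∑ l, t s(k, l) * ((∑ i, Z k i * A i r) * (∑ j, Z l j * A j r)) := by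
      simp_rw [sum_mul]
      rw [sum_comm]
      refine sum_congr rfl fun k _ => ?_
      rw [sum_comm]
      refine sum_congr rfl fun l _ => ?_
      simp only [ite_mul, zero_mul]
      rw [sum_ite_eq]
      simp only [mem_univ, if_true]
      rw [mul_comm]
    rw [e1]
    simp_rw [sum_mul_sum, mul_sum]
    simp only [X, sum_mul]
    calc _ = ∑ k, ∑ i, ∑ j, ∑ l, t s(k, l) * (Z k i * Z l j) * (A i r * A j r) := by
          rw [sum_comm (s := (univ : Finset (Fin (m - 2))))]
          refine sum_congr rfl fun i _ => ?_
          rw [sum_comm]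
      _ = _ := by
          refine sum_congr rfl fun k _ => ?_
          rw [sum_comm (s := (univ : Finset (Fin (m - 2))))]
          refine sum_congr rfl fun i _ => ?_
          rw [sum_comm]
          exact sum_congr rfl fun l _ => sum_congr rfl fun j _ => by ring
  have hXA' : ∀ r, r ≠ r₀ → ∑ i, ∑ j, X i j * (A i r * A j r) = 0 := fun r hr => by
    rw [hXAt]
    exact ht ⟨r, hr⟩
  -- pairing the relation with `X` gives the equation for `r₀`
  have hXA₀ : ∑ i, ∑ j, X i j * (A i r₀ * A j r₀) = 0 := by
    have h1 : ∑ r, M r * ∑ i, ∑ j, X i j * (A i r * A j r) = 0 := by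
      calc _ = ∑ i, ∑ j, X i j * ∑ r, A i r * A j r * M r := by
            simp_rw [mul_sum]
            rw [sum_comm]
            refine sum_congr rfl fun i _ => ?_
            rw [sum_comm]
            exact sum_congr rfl fun _ _ => sum_congr rfl fun _ _ => by ring
        _ = ∑ i, ∑ u, β u * b u i * ∑ j, X i j * b u j := by
            simp_rw [h, mul_sum]
            refine sum_congr rfl fun i _ => ?_
            rw [sum_comm]
            exact sum_congr rfl fun _ _ => sum_congr rfl fun _ _ => by ring
        _ = 0 := by simp [hXb]
    rw [sum_eq_single r₀ (fun r _ hr => by rw [hXA' r hr, mul_zero]) (by simp)] at h1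
    exact (mul_eq_zero.1 h1).resolve_left hr₀
  have hXa := hA.derive_pairing M β b h X hXsymm hXb fun r _ => by
    by_cases hr : r = r₀
    · rw [hr, hXA₀]
    · exact hXA' r hr
  have hX0 : ∀ i, X i = 0 := fun i =>
    hA.eq_zero_of_orthogonal (X i) _ hc fun r hr => hXa r (by simpa using hr) i
  apply ht0
  ext s
  induction s with
  | h k l =>
    refine hZ (fun l => t s(k, l)) ?_ l
    ext j
    have := hZ (fun k => ∑ l, t s(k, l) * Z l j) (by
      ext i
      have hij := congrFun (hX0 i) j
      simp only [X, Pi.zero_apply] at hij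
      simp only [Finset.sum_apply, Pi.smul_apply, smul_eq_mul, Pi.zero_apply]
      rw [← hij]
      refine sum_congr rfl fun k _ => ?_
      rw [sum_mul]
      exact sum_congr rfl fun l _ => by ring) k
    simpa using this

end

end

/-! ### Comparison of decompositions -/

section
open Finset

section
variable {F : Type} [Field F] [CharZero F] [DecidableEq F] {m K R : ℕ} {A : Fin m → Fin R → F}

/-- A nonzero vector orthogonal to a vector without zero entries has at least two nonzero entries. -/
theorem two_le_card_support {F : Type} [Field F] [DecidableEq F] {R : ℕ} {n l : Fin R → F}
    (hn : ∀ r, n r ≠ 0) (hl : l ≠ 0) (hnl : ∑ r, n r * l r = 0) : 2 ≤ #{r | l r ≠ 0} := by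
  by_contra! hlt
  obtain ⟨p, hp⟩ := Function.ne_iff.1 hl
  have h1 := card_le_one.1 (Nat.le_of_lt_succ hlt)
  rw [sum_eq_single p _ (by simp)] at hnl
  · exact mul_ne_zero (hn p) hp hnl
  · intro r _ hr
    by_contra h
    exact hr (h1 r (by simpa using right_ne_zero_of_mul h) p (by simpa using hp))

/-- If a nonzero `l` orthogonal to `n` turns the `a_r a_rᵀ` into a combination of two squares, the
first with a nonzero coefficient and the second of a nonzero vector, then `l` is supported on exactly
two indices `p, q`, and the first squared vector lies in the span of
`a_p` and `a_q`. -/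
theorem HasFreeDerivations.exists_pair (hA : HasFreeDerivations A) (hm : 5 ≤ m) (hmR : m ≤ R)
    (hR : 2 * R = (m - 1) * (m - 2)) {n l : Fin R → F}
    (hn : ∀ r, n r ≠ 0) (hl : l ≠ 0) (hnl : ∑ r, n r * l r = 0)
    {b b' : Fin m → F} {β γ : F} (hβ : β ≠ 0) (hb' : b' ≠ 0)
    (h : ∀ i j, ∑ r, A i r * A j r * l r = β * b i * b j + γ * b' i * b' j) :
    ∃ p q, p ≠ q ∧ l p ≠ 0 ∧ (∀ r, r ≠ p → r ≠ q → l r = 0) ∧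
      ∃ x y, ∀ i, b i = x * A i p + y * A i q := by
  have h2 := two_le_card_support hn hl hnl
  have hle : #{r | l r ≠ 0} ≤ 2 :=
    hA.card_support_le_two hm hR l ![β, γ] ![b, b'] fun i j => by simp [h]
  obtain ⟨p, q, hpq, hS⟩ := card_eq_two.1 (le_antisymm hle h2)
  have hmem : ∀ r, l r ≠ 0 ↔ r = p ∨ r = q := fun r => by
    have := Finset.ext_iff.1 hS r
    simpa using this
  refine ⟨p, q, hpq, (hmem p).2 (Or.inl rfl), fun r h1 h2 => ?_, ?_⟩
  · by_contra hr
    exact ((hmem r).1 hr).elim h1 h2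
  have hsum : ∀ i j, A i p * A j p * l p + A i q * A j q * l q
      = β * b i * b j + γ * b' i * b' j := fun i j => by
    rw [← h, ← sum_subset (subset_univ {p, q}) fun r _ hr => ?_, sum_pair hpq]
    have : l r = 0 := by
      by_contra h0
      exact hr (by simpa using (hmem r).1 h0)
    rw [this, mul_zero]
  by_cases hpar : ∀ i j, b i * b' j = b j * b' i
  · -- parallel vectors would make the right-hand side of rank one
    exfalso
    obtain ⟨j₀, hj₀⟩ := Function.ne_iff.1 hb'
    simp only [Pi.zero_apply] at hj₀
    have hb : ∀ i, b i = b j₀ / b' j₀ * b' i := fun i => by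
      field_simp
      exact hpar i j₀
    have := hA.card_support_le_of_card_le hmR l (q := 1)
      (fun _ => β * (b j₀ / b' j₀) ^ 2 + γ) (fun _ => b') (fun i j => by
        rw [h, hb i, hb j, Fin.sum_univ_one]
        ring) (by omega)
    omega
  · push Not at hpar
    obtain ⟨i₀, j₀, hij⟩ := hpar
    have hne : β * (b i₀ * b' j₀ - b j₀ * b' i₀) ≠ 0 := mul_ne_zero hβ (sub_ne_zero.2 hij)
    -- contract with `b' j₀ • e i₀ - b' i₀ • e j₀`, which is orthogonal to `b'` but not to `b`
    refine ⟨(A i₀ p * b' j₀ - A j₀ p * b' i₀) * l p / (β * (b i₀ * b' j₀ - b j₀ * b' i₀)),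
      (A i₀ q * b' j₀ - A j₀ q * b' i₀) * l q / (β * (b i₀ * b' j₀ - b j₀ * b' i₀)),
      fun i => ?_⟩
    have e : b i * (β * (b i₀ * b' j₀ - b j₀ * b' i₀))
        = (A i₀ p * b' j₀ - A j₀ p * b' i₀) * l p * A i p
          + (A i₀ q * b' j₀ - A j₀ q * b' i₀) * l q * A i q := by
      linear_combination b' i₀ * hsum i j₀ - b' j₀ * hsum i i₀
    rw [div_mul_eq_mul_div, div_mul_eq_mul_div, ← add_div, eq_div_iff hne, e]

/-- An injective linear map from `F ^ K` to a space of dimension at most `K + 1` has a range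
containing the kernel of some linear form `μ`; here `μ = 0` if the map is onto. -/
theorem exists_functional {F : Type} [Field F] {K R' : ℕ} (hR' : R' ≤ K + 1)
    (d : Fin R' → Fin K → F)
    (hd : ∀ y : Fin K → F, (∀ s, ∑ k, d s k * y k = 0) → y = 0) :
    ∃ μ : Fin R' → F, ∀ w : Fin R' → F, ∑ s, μ s * w s = 0 →
      ∃ y : Fin K → F, ∀ s, ∑ k, d s k * y k = w s := by
  let f : (Fin K → F) →ₗ[F] (Fin R' → F) := Matrix.mulVecLin (Matrix.of d)
  have hf : LinearMap.ker f = ⊥ := by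
    rw [LinearMap.ker_eq_bot']
    intro y hy
    exact hd y fun s => congrFun hy s
  have hfr : Module.finrank F (LinearMap.range f) = K := by
    rw [LinearMap.finrank_range_of_inj (LinearMap.ker_eq_bot.1 hf), Module.finrank_fin_fun]
  suffices ∃ μ : Fin R' → F, ∀ w : Fin R' → F, ∑ s, μ s * w s = 0 → w ∈ LinearMap.range f by
    obtain ⟨μ, hμ⟩ := this
    refine ⟨μ, fun w hw => ?_⟩
    obtain ⟨y, hy⟩ := hμ w hw
    exact ⟨y, fun s => congrFun hy s⟩
  rcases eq_or_lt_of_le (le_top (a := LinearMap.range f)) with htop | hlt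
  · exact ⟨0, fun w _ => htop ▸ Submodule.mem_top⟩
  · obtain ⟨g, hg0, hg⟩ := Submodule.exists_le_ker_of_lt_top _ hlt
    have hker : Module.finrank F (LinearMap.ker g) + 1 = R' := by
      have := Module.Dual.finrank_ker_add_one_of_ne_zero hg0
      rwa [Module.finrank_fin_fun] at this
    have heq := Submodule.eq_of_le_of_finrank_le hg (by omega)
    refine ⟨fun s => g (Pi.single s 1), fun w hw => ?_⟩
    rw [heq, LinearMap.mem_ker, ← hw]
    conv_lhs => rw [LinearMap.pi_apply_eq_sum_univ g w]
    refine sum_congr rfl fun s _ => ?_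
    rw [smul_eq_mul, mul_comm]
    congr 2
    ext t
    simp [Pi.single_apply, eq_comm]

/-- The matrices `a_r a_rᵀ` are linearly independent. -/
theorem HasFreeDerivations.square_independent (hA : HasFreeDerivations A) (hm : 5 ≤ m)
    (hR : 2 * R = (m - 1) * (m - 2)) (M : Fin R → F)
    (h : ∀ i j, ∑ r, A i r * A j r * M r = 0) : M = 0 := by
  have hle : #{r | M r ≠ 0} ≤ 2 :=
    hA.card_support_le_two hm hR M 0 0 fun i j => by simp [h]
  ext r
  obtain ⟨j, hj⟩ := hA.ne_zero_column (by omega) r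
  have := hA.eq_zero_of_sum_eq_zero (fun r => A j r * M r)
    (fun i => by simpa [mul_assoc] using h i j)
    ((card_le_card fun r hr => by
      simp only [mem_filter, mem_univ, true_and] at hr ⊢
      exact right_ne_zero_of_mul hr).trans (hle.trans (by omega)))
  exact (mul_eq_zero.1 (congrFun this r)).resolve_left hj

theorem HasFreeDerivations.exists_kernel_vector {C : Fin K → Fin R → F}
    (hC : HasFreeDerivations C) (hRK : R = K + 1) :
    ∃ n : Fin R → F, (∀ r, n r ≠ 0) ∧ ∀ k, ∑ r, C k r * n r = 0 := by
  obtain ⟨n, hn0, hn⟩ := exists_ne_zero_sum_eq_zero (β := Fin K) (α := Fin R)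
    (by simp [hRK]) C
  refine ⟨n, fun r hr => hn0 (hC.eq_zero_of_sum_eq_zero n hn ?_), hn⟩
  have : #{r | n r ≠ 0} ≤ #(univ.erase r) := card_le_card fun s hs => by
    simp only [mem_filter, mem_univ, true_and] at hs
    simp only [mem_erase, mem_univ, and_true]
    rintro rfl
    exact hs hr
  rw [card_erase_of_mem (mem_univ _), card_univ, Fintype.card_fin] at this
  omega

/-- In any decomposition of `[A, A, C]` with at most `R` terms, every vector `b s` of the first factor
is parallel to a column of `A`. -/
theorem exists_parallel (hA : HasFreeDerivations A) {C : Fin K → Fin R → F}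
    (hC : HasFreeDerivations C) (hm : 5 ≤ m) (hmR : m ≤ R)
    (hR : 2 * R = (m - 1) * (m - 2)) (hRK : R = K + 1) {R' : ℕ} (hR' : R' ≤ R)
    (b : Fin R' → Fin m → F) (d : Fin R' → Fin K → F) (hb : ∀ s, b s ≠ 0)
    (h : ∀ i j k, ∑ r, A i r * A j r * C k r = ∑ s, b s i * b s j * d s k) (s : Fin R') :
    ∃ r x, ∀ i, b s i = x * A i r := by
  obtain ⟨n, hn, hCn⟩ := hC.exists_kernel_vector hRK
  have hy : ∀ (y : Fin K → F) i j, ∑ r, A i r * A j r * (∑ k, C k r * y k)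
      = ∑ s, b s i * b s j * ∑ k, d s k * y k := fun y i j => by
    have := congrArg (fun g : Fin K → F => ∑ k, g k * y k) (funext (h i j))
    simp only [sum_mul] at this
    conv_lhs at this => rw [sum_comm]
    conv_rhs at this => rw [sum_comm]
    simpa only [mul_sum, mul_assoc] using this
  have hny : ∀ y : Fin K → F, ∑ r, n r * ∑ k, C k r * y k = 0 := fun y => by
    have : ∑ k, y k * ∑ r, C k r * n r = 0 := by simp [hCn]
    rw [← this]
    simp_rw [mul_sum]
    rw [sum_comm]
    exact sum_congr rfl fun _ _ => sum_congr rfl fun _ _ => by ring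
  have hCinj : ∀ y : Fin K → F, (fun r => ∑ k, C k r * y k) = 0 → y = 0 := fun y h0 =>
    hC.eq_zero_of_orthogonal y univ (by simp [hRK]) fun r _ => by
      simpa [mul_comm] using congrFun h0 r
  have hdinj : ∀ y : Fin K → F, (∀ s, ∑ k, d s k * y k = 0) → y = 0 := fun y h0 =>
    hCinj y (hA.square_independent hm hR _ fun i j => by rw [hy]; simp [h0])
  have hKR' : K ≤ R' := by
    by_contra! hlt
    obtain ⟨z, hz0, hz⟩ := exists_ne_zero_sum_eq_zero (β := Fin R') (α := Fin K)
      (by simpa using hlt) d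
    exact hz0 (hdinj z hz)
  obtain ⟨μ, hμ⟩ := exists_functional (by omega) d hdinj
  have hl0 : ∀ y : Fin K → F, ∀ s, ∑ k, d s k * y k ≠ 0 → (fun r => ∑ k, C k r * y k) ≠ 0 :=
    fun y s hs h0 => hs (by simp [hCinj y h0])
  -- if `μ s = 0`, the single square `b s` would be a combination of the `a_r a_rᵀ` with at least two
  -- nonzero coefficients
  have hμ0 : ∀ s, μ s ≠ 0 := fun s hs => by
    obtain ⟨y, hys⟩ := hμ (Pi.single s 1) (by simp [Pi.single_apply, hs])
    have hne := hl0 y s (by simp [hys])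
    have hE : ∀ i j, ∑ r, A i r * A j r * (∑ k, C k r * y k) = b s i * b s j := fun i j => by
      rw [hy]
      simp [hys, Pi.single_apply]
    have h2 := two_le_card_support hn hne (hny y)
    have hle := hA.card_support_le_two hm hR _ ![1, 0] ![b s, 0] fun i j => by
      rw [hE]; simp
    have := hA.card_support_le_of_card_le hmR _ (q := 1) (fun _ => 1) (fun _ => b s)
      (fun i j => by rw [hE]; simp) (hle.trans (by omega))
    omega
  -- the vector `μ t • e s - μ s • e t` is annihilated by `μ`, hence attained
  have hpair : ∀ t, t ≠ s → ∃ y : Fin K → F,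
      (∑ k, d t k * y k = - μ s) ∧ (∀ u, u ≠ s → u ≠ t → ∑ k, d u k * y k = 0) ∧
      ∃ p q, p ≠ q ∧ ∑ k, C k p * y k ≠ 0 ∧
        (∀ r, r ≠ p → r ≠ q → ∑ k, C k r * y k = 0) ∧
        ∃ x x', ∀ i, b s i = x * A i p + x' * A i q := fun t ht => by
    obtain ⟨y, hyw⟩ := hμ (Pi.single s (μ t) - Pi.single t (μ s)) (by
      simp [Pi.single_apply, mul_sub, sum_sub_distrib, mul_comm])
    refine ⟨y, by simp [hyw, ht], fun u h1 h2 => by simp [hyw, h1, h2], ?_⟩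
    refine hA.exists_pair hm hmR hR hn (hl0 y s (by simp [hyw, ht.symm, hμ0 t])) (hny y)
      (hμ0 t) (hb t) (γ := - μ s) fun i j => ?_
    rw [hy]
    simp only [hyw, Pi.sub_apply, Pi.single_apply, mul_sub, sum_sub_distrib, mul_ite, mul_zero,
      sum_ite_eq', mem_univ, if_true]
    ring
  by_contra! hnot
  obtain ⟨t, t', hts, ht's, htt'⟩ : ∃ t t' : Fin R', t ≠ s ∧ t' ≠ s ∧ t' ≠ t := by
    have hc : 1 < #(univ.erase s) := by
      rw [card_erase_of_mem (mem_univ _), card_univ, Fintype.card_fin]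
      omega
    obtain ⟨t, ht, t', ht', hne⟩ := one_lt_card.1 hc
    exact ⟨t, t', (mem_erase.1 ht).1, (mem_erase.1 ht').1, hne.symm⟩
  obtain ⟨y, -, hyu, p, q, hpq, hlp, hlr, x, x', hx⟩ := hpair t hts
  obtain ⟨z, hzt, -, p₁, q₁, hpq₁, hlp₁, hlr₁, x₁, x₁', hx₁⟩ := hpair t' ht's
  have hx0 : x ≠ 0 := fun h0 => by
    obtain ⟨i, hi⟩ := hnot q x'
    exact hi (by rw [hx, h0, zero_mul, zero_add])
  have hx0' : x' ≠ 0 := fun h0 => by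
    obtain ⟨i, hi⟩ := hnot p x
    exact hi (by rw [hx, h0, zero_mul, add_zero])
  -- the two expansions of `b s` in the columns of `A` agree
  have hcoef : (Pi.single p x + Pi.single q x' - Pi.single p₁ x₁ - Pi.single q₁ x₁' :
      Fin R → F) = 0 := by
    apply hA.eq_zero_of_sum_eq_zero
    · intro i
      simp only [Pi.sub_apply, Pi.add_apply, Pi.single_apply, mul_sub, mul_add, sum_sub_distrib,
        sum_add_distrib, mul_ite, mul_zero, sum_ite_eq', mem_univ, if_true]
      linear_combination hx₁ i - hx i
    · have : #{r | (Pi.single p x + Pi.single q x' - Pi.single p₁ x₁ - Pi.single q₁ x₁' :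
          Fin R → F) r ≠ 0} ≤ #{p, q, p₁, q₁} := card_le_card fun r hr => by
        by_contra hr'
        simp only [mem_insert, mem_singleton, not_or] at hr'
        simp [Pi.single_apply, hr'] at hr
      exact this.trans (card_le_four.trans (by omega))
  have hp : p = p₁ ∨ p = q₁ := by
    by_contra! hne
    have := congrFun hcoef p
    simp [hne, hpq] at this
    exact hx0 this
  have hq : q = p₁ ∨ q = q₁ := by
    by_contra! hne
    have := congrFun hcoef q
    simp [hne, hpq.symm] at this
    exact hx0' this
  have hlr' : ∀ r, r ≠ p → r ≠ q → ∑ k, C k r * z k = 0 := fun r h1 h2 => by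
    apply hlr₁
    · rintro rfl; grind
    · rintro rfl; grind
  have hsum : ∀ v : Fin K → F, (∀ r, r ≠ p → r ≠ q → ∑ k, C k r * v k = 0) →
      n p * (∑ k, C k p * v k) + n q * (∑ k, C k q * v k) = 0 := fun v hv => by
    rw [← hny v, ← sum_subset (subset_univ {p, q}) fun r _ hr => ?_, sum_pair hpq]
    simp only [mem_insert, mem_singleton, not_or] at hr
    rw [hv r hr.1 hr.2, mul_zero]
  -- both `Cᵀ y` and `Cᵀ z` are supported on `{p, q}` and orthogonal to `n`, hence proportional
  have hv0 : (fun k => (∑ k, C k p * y k) * z k - (∑ k, C k p * z k) * y k) = 0 := by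
    have hlin : ∀ r, ∑ k, C k r * ((∑ k, C k p * y k) * z k - (∑ k, C k p * z k) * y k)
        = (∑ k, C k p * y k) * (∑ k, C k r * z k) - (∑ k, C k p * z k) * ∑ k, C k r * y k :=
      fun r => by
        rw [mul_sum, mul_sum, ← sum_sub_distrib]
        exact sum_congr rfl fun _ _ => by ring
    apply hCinj
    ext r
    rw [hlin]
    by_cases hrp : r = p
    · rw [hrp]; simp only [Pi.zero_apply]; ring
    · by_cases hrq : r = q
      · rw [hrq]
        apply (mul_eq_zero.1 (?_ : n q * _ = 0)).resolve_left (hn q)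
        linear_combination (∑ k, C k p * y k) * hsum z hlr' - (∑ k, C k p * z k) * hsum y hlr
      · simp [hlr r hrp hrq, hlr' r hrp hrq]
  have hfin : (∑ k, C k p * y k) * (∑ k, d t' k * z k)
      - (∑ k, C k p * z k) * (∑ k, d t' k * y k) = 0 := by
    rw [mul_sum, mul_sum, ← sum_sub_distrib]
    refine sum_eq_zero fun k _ => ?_
    have hk := congrFun hv0 k
    simp only [Pi.zero_apply] at hk
    linear_combination d t' k * hk
  rw [hzt, hyu t' ht's htt', mul_zero, sub_zero] at hfin
  exact mul_ne_zero hlp (neg_ne_zero.2 (hμ0 s)) hfin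

/-- Any decomposition of `[A, A, C]` with at most `R` terms consists of exactly the given terms, up to
permutation. In particular, it has exactly `R` terms. -/
theorem exists_bijective (hA : HasFreeDerivations A) {C : Fin K → Fin R → F}
    (hC : HasFreeDerivations C) (hm : 5 ≤ m) (hmR : m ≤ R)
    (hR : 2 * R = (m - 1) * (m - 2)) (hRK : R = K + 1) {R' : ℕ} (hR' : R' ≤ R)
    (b : Fin R' → Fin m → F) (d : Fin R' → Fin K → F) (h : IsSfsPD (sfsSum A C) R' b d) :
    ∃ σ : Fin R' ≃ Fin R, ∀ s i j k,
      b s i * b s j * d s k = A i (σ s) * A j (σ s) * C k (σ s) := by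
  obtain ⟨hb, hd, h⟩ := h
  simp only [sfsSum] at h
  choose σ x hx using exists_parallel hA hC hm hmR hR hRK hR' b d hb h
  -- comparing coefficients of the independent matrices `a_r a_rᵀ`
  have hCd : ∀ k r, C k r = ∑ s with σ s = r, x s ^ 2 * d s k := fun k r => by
    have := hA.square_independent hm hR
      (fun r => C k r - ∑ s with σ s = r, x s ^ 2 * d s k) (fun i j => by
        simp only [mul_sub, sum_sub_distrib]
        rw [h, sub_eq_zero]
        rw [← sum_fiberwise (s := (univ : Finset (Fin R'))) (g := σ)]
        refine sum_congr rfl fun r _ => ?_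
        rw [mul_sum]
        refine sum_congr rfl fun s hs => ?_
        rw [hx, hx, (mem_filter.1 hs).2]
        ring)
    exact sub_eq_zero.1 (congrFun this r)
  have hsurj : Function.Surjective σ := fun r => by
    by_contra! hr
    obtain ⟨k, hk⟩ := hC.ne_zero_column (by omega) r
    apply hk
    rw [hCd, filter_false_of_mem (fun s _ => hr s), sum_empty]
  have hcard := Fintype.card_le_of_surjective σ hsurj
  have hbij : Function.Bijective σ :=
    (Fintype.bijective_iff_surjective_and_card σ).2 ⟨hsurj, by simp at hcard ⊢; omega⟩
  refine ⟨Equiv.ofBijective σ hbij, fun s i j k => ?_⟩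
  simp only [Equiv.ofBijective_apply]
  have : (univ.filter fun s' => σ s' = σ s) = {s} := by
    ext s'
    simp [hbij.1.eq_iff]
  rw [hCd, this, sum_singleton, hx, hx]
  ring

end

end

/-! ### Generic uniqueness -/

theorem HasFreeDerivations.of_algebraicIndependent {F : Type} [Field F] [CharZero F] {m R : ℕ}
    {A : Fin m → Fin R → F} (hA : AlgebraicIndependent ℚ fun l : Fin (m * R) =>
      A (finProdFinEquiv.symm l).1 (finProdFinEquiv.symm l).2) : HasFreeDerivations A := by
  intro V
  obtain ⟨D, hD⟩ := exists_derivation hA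
    fun l => V (finProdFinEquiv.symm l).1 (finProdFinEquiv.symm l).2
  exact ⟨D, fun i r => by simpa using hD (finProdFinEquiv (i, r))⟩

theorem sfsCPDUnique_of_hasFreeDerivations {F : Type} [Field F] [CharZero F] {m K R : ℕ}
    {A : Fin m → Fin R → F} {C : Fin K → Fin R → F} (hA : HasFreeDerivations A)
    (hC : HasFreeDerivations C) (hm : 5 ≤ m) (hmR : m ≤ R)
    (hR : 2 * R = (m - 1) * (m - 2)) (hRK : R = K + 1) : SfsCPDUnique (sfsSum A C) := by
  classical
  have hrank : sfsRank (sfsSum A C) ≤ R := by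
    refine Nat.sInf_le ⟨fun r i => A i r, fun r k => C k r, fun r => ?_, fun r => ?_,
      fun i j k => rfl⟩
    · exact Function.ne_iff.2 (hA.ne_zero_column (by omega) r)
    · exact Function.ne_iff.2 (hC.ne_zero_column (by omega) r)
  intro a a' c c' h h'
  obtain ⟨σ, hσ⟩ := exists_bijective hA hC hm hmR hR hRK hrank a c h
  obtain ⟨τ, hτ⟩ := exists_bijective hA hC hm hmR hR hRK hrank a' c' h'
  exact ⟨σ.trans τ.symm, fun r i j k => by rw [hσ, hτ]; simp⟩

theorem sfsGenericallyUnique_of_field (F : Type) [Field F] [CharZero F] [TopologicalSpace F]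
    [IsTopologicalRing F] [T1Space F] [SecondCountableTopology F] [MeasureSpace F] [BorelSpace F]
    [SigmaFinite (volume : Measure F)] [NullSingletonClass (volume : Measure F)] {m K R : ℕ}
    (hm : 5 ≤ m) (hmR : m ≤ R) (hR : 2 * R = (m - 1) * (m - 2)) (hRK : R = K + 1) :
    SFSGenericallyUnique F m K R := by
  unfold SFSGenericallyUnique
  have h1 : ∀ᵐ p : (Fin m → Fin R → F) × (Fin K → Fin R → F), AlgebraicIndependent ℚ
      fun l : Fin (m * R) => p.1 (finProdFinEquiv.symm l).1 (finProdFinEquiv.symm l).2 :=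
    Measure.quasiMeasurePreserving_fst.ae (ae_algebraicIndependent m R)
  have h2 : ∀ᵐ p : (Fin m → Fin R → F) × (Fin K → Fin R → F), AlgebraicIndependent ℚ
      fun l : Fin (K * R) => p.2 (finProdFinEquiv.symm l).1 (finProdFinEquiv.symm l).2 :=
    Measure.quasiMeasurePreserving_snd.ae (ae_algebraicIndependent K R)
  have h3 : ∀ᵐ p : (Fin m → Fin R → F) × (Fin K → Fin R → F),
      SfsCPDUnique (sfsSum p.1 p.2) := by
    filter_upwards [h1, h2] with p hp1 hp2
    exact sfsCPDUnique_of_hasFreeDerivations (.of_algebraicIndependent hp1)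
      (.of_algebraicIndependent hp2) hm hmR hR hRK
  exact ae_iff.1 h3

/-- If `I ≥ 5`, `K = (I² − 3I)/2` and `R = (I² − 3I)/2 + 1`, then for
`F = ℝ` and `F = ℂ` the SFS-CPD of an `I×I×K` SFS-tensor of SFS-rank `R` is generically
unique. -/
theorem statement19 (I K R : ℕ) (hI : 5 ≤ I) (hK : 2 * K = I ^ 2 - 3 * I)
    (hR : R = K + 1) :
    SFSGenericallyUnique ℝ I K R ∧ SFSGenericallyUnique ℂ I K R := by
  obtain ⟨k, rfl⟩ := Nat.exists_eq_add_of_le hI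
  have hK' : 2 * K = k ^ 2 + 7 * k + 10 := by
    rw [hK, Nat.sub_eq_iff_eq_add (by nlinarith)]
    ring
  have e1 : 5 + k - 1 = k + 4 := by omega
  have e2 : 5 + k - 2 = k + 3 := by omega
  have hR2 : 2 * R = (5 + k - 1) * (5 + k - 2) := by
    rw [e1, e2]
    nlinarith
  have hmR : 5 + k ≤ R := by nlinarith
  exact ⟨sfsGenericallyUnique_of_field ℝ hI hmR hR2 hR,
    sfsGenericallyUnique_of_field ℂ hI hmR hR2 hR⟩
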